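/- (BTZ closed form for S.) Let β > 0 and k be real, let 0 < ν < 1, and define for each integer m ≥ 1 the BTZ quasinormal frequencies ω⁺_{m,1} = k − (2πi/β)(2m+ν−1), ω⁺_{m,2} = −k − (2πi/β)(2m+ν−1), ω⁻_{m,1} = k − (2πi/β)(2m−ν−1), ω⁻_{m,2} = −k − (2πi/β)(2m−ν−1). Then for every ω ∈ ℂ the infinite product over m ≥ 1 of (1 − ω/ω⁺_{m,1})·(1 − ω/ω⁺_{m,2})·(1 + ω/ω⁻_{m,1})·(1 + ω/ω⁻_{m,2}) converges (the family is multipliable) and equals (cos(πν − iβω/2) + cosh(βk/2))/(cos(πν) + cosh(βk/2)). -/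

import Mathlib

open Complex Filter Topology

/-- The `m`-th factor of the BTZ spectral product: poles at
`±k − (2πi/β)(2m+ν−1)` and zeros at `±k − (2πi/β)(2m−ν−1)`, for `m ≥ 1`
(indexed here by `m : ℕ` via `m+1`). -/
noncomputable def btzFactor (β k ν : ℝ) (ω : ℂ) (m : ℕ) : ℂ :=
  (1 - ω / ((k : ℂ) - (2 * (Real.pi : ℂ) * Complex.I / (β : ℂ)) * (2 * ((m : ℂ) + 1) + (ν : ℂ) - 1))) *
  (1 - ω / (-(k : ℂ) - (2 * (Real.pi : ℂ) * Complex.I / (β : ℂ)) * (2 * ((m : ℂ) + 1) + (ν : ℂ) - 1))) *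
  (1 + ω / ((k : ℂ) - (2 * (Real.pi : ℂ) * Complex.I / (β : ℂ)) * (2 * ((m : ℂ) + 1) - (ν : ℂ) - 1))) *
  (1 + ω / (-(k : ℂ) - (2 * (Real.pi : ℂ) * Complex.I / (β : ℂ)) * (2 * ((m : ℂ) + 1) - (ν : ℂ) - 1)))

/-- Partial products of the odd (cosine) product, compared with the sine products. -/
theorem cosProd_aux (x : ℂ) (n : ℕ) :
    ((Real.pi : ℂ) * ((x + 1) / 2) *
        ∏ j ∈ Finset.range n, (1 - ((x + 1) / 2) ^ 2 / ((j : ℂ) + 1) ^ 2)) * (2 * n + 1) =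
      (∏ j ∈ Finset.range n, (1 - x ^ 2 / (2 * (j : ℂ) + 1) ^ 2)) *
        ((Real.pi : ℂ) * (1 / 2) *
          ∏ j ∈ Finset.range n, (1 - (1 / 2 : ℂ) ^ 2 / ((j : ℂ) + 1) ^ 2)) * (2 * n + 1 + x) := by
  induction n with
  | zero => simp; ring
  | succ n ih =>
    have h1 : (n : ℂ) + 1 ≠ 0 := Nat.cast_add_one_ne_zero n
    have h2 : 2 * (n : ℂ) + 1 ≠ 0 := by exact_mod_cast Nat.succ_ne_zero (2 * n)
    simp only [Finset.prod_range_succ]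
    push_cast
    generalize (∏ j ∈ Finset.range n, (1 - ((x + 1) / 2) ^ 2 / ((j : ℂ) + 1) ^ 2)) = A at *
    generalize (∏ j ∈ Finset.range n, (1 - (1 / 2 : ℂ) ^ 2 / ((j : ℂ) + 1) ^ 2)) = B at *
    generalize (∏ j ∈ Finset.range n, (1 - x ^ 2 / (2 * (j : ℂ) + 1) ^ 2)) = C at *
    have e1 : 1 - ((x + 1) / 2) ^ 2 / ((n : ℂ) + 1) ^ 2 =
        (2 * n + 1 - x) * (2 * n + 3 + x) / (4 * ((n : ℂ) + 1) ^ 2) := by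
      field_simp; ring
    have e2 : 1 - (1 / 2 : ℂ) ^ 2 / ((n : ℂ) + 1) ^ 2 =
        (2 * n + 1) * (2 * n + 3) / (4 * ((n : ℂ) + 1) ^ 2) := by
      field_simp; ring
    have e3 : 1 - x ^ 2 / (2 * (n : ℂ) + 1) ^ 2 =
        (2 * n + 1 - x) * (2 * n + 1 + x) / (2 * (n : ℂ) + 1) ^ 2 := by
      field_simp; ring
    rw [e1, e2, e3]
    generalize (n : ℂ) = y at *
    have ih' : (Real.pi : ℂ) * ((x + 1) / 2) * A =
        C * ((Real.pi : ℂ) * (1 / 2) * B) * (2 * y + 1 + x) / (2 * y + 1) := by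
      rw [eq_div_iff h2]; exact ih
    rw [← mul_assoc ((Real.pi : ℂ) * ((x + 1) / 2)), ih']
    field_simp
    ring

theorem cosProd_summable (x : ℂ) : Summable fun m : ℕ => ‖-(x ^ 2 / (2 * (m : ℂ) + 1) ^ 2)‖ := by
  have h : Summable fun m : ℕ => ‖x‖ ^ 2 * (1 / ((m : ℝ) + 1) ^ 2) := by
    apply Summable.mul_left
    have := (summable_nat_add_iff 1).mpr (Real.summable_one_div_nat_pow.mpr one_lt_two)
    simpa using this
  refine Summable.of_nonneg_of_le (fun _ => norm_nonneg _) (fun m => ?_) h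
  have e : ‖2 * (m : ℂ) + 1‖ = 2 * (m : ℝ) + 1 := by
    have : (2 * (m : ℂ) + 1) = ((2 * m + 1 : ℕ) : ℂ) := by push_cast; ring
    rw [this, Complex.norm_natCast]; push_cast; ring
  rw [norm_neg, norm_div, norm_pow, norm_pow, e, div_eq_mul_one_div]
  gcongr
  have : (0 : ℝ) ≤ m := Nat.cast_nonneg m
  linarith

theorem cosProd_hasProd (x : ℂ) :
    HasProd (fun m : ℕ => 1 - x ^ 2 / (2 * (m : ℂ) + 1) ^ 2) (Complex.cos (Real.pi * x / 2)) := by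
  have hm : Multipliable (fun m : ℕ => 1 - x ^ 2 / (2 * (m : ℂ) + 1) ^ 2) := by
    simpa [sub_eq_add_neg] using multipliable_one_add_of_summable (cosProd_summable x)
  rw [hm.hasProd_iff_tendsto_nat]
  have t1 := Complex.tendsto_euler_sin_prod ((x + 1) / 2)
  have t2 := Complex.tendsto_euler_sin_prod (1 / 2)
  have s1 : Complex.sin (Real.pi * ((x + 1) / 2)) = Complex.cos (Real.pi * x / 2) := by
    rw [← Complex.sin_add_pi_div_two]; congr 1; ring
  have s2 : Complex.sin (Real.pi * (1 / 2)) = 1 := by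
    rw [mul_one_div, Complex.sin_pi_div_two]
  rw [s1] at t1
  rw [s2] at t2
  have t0 : Tendsto (fun n : ℕ => x / (2 * (n : ℂ) + 1)) atTop (𝓝 0) := by
    have h := (summable_norm_iff.mp (cosProd_summable 1)).tendsto_atTop_zero
    rw [tendsto_zero_iff_norm_tendsto_zero] at h ⊢
    have h' := (h.sqrt).const_mul ‖x‖
    simp only [Real.sqrt_zero, mul_zero] at h'
    refine h'.congr fun n => ?_
    rw [norm_neg, norm_div, norm_pow, norm_pow, norm_one, one_pow, Real.sqrt_div zero_le_one,
      Real.sqrt_one, Real.sqrt_sq (norm_nonneg _), norm_div, mul_one_div]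
  have t3 : Tendsto (fun n : ℕ => 1 + x / (2 * (n : ℂ) + 1)) atTop (𝓝 1) := by
    simpa using t0.const_add 1
  have t4 := t2.mul t3
  rw [mul_one] at t4
  have t5 := t1.div t4 one_ne_zero
  rw [div_one] at t5
  refine t5.congr' ?_
  filter_upwards [t4.eventually_ne one_ne_zero] with n hn
  simp only [Pi.div_apply]
  rw [div_eq_iff hn]
  have h2 : 2 * (n : ℂ) + 1 ≠ 0 := by exact_mod_cast Nat.succ_ne_zero (2 * n)
  have := cosProd_aux x n
  rw [← eq_div_iff h2] at this
  rw [this]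
  field_simp

theorem odd_ne (a : ℂ) (h0 : 0 < a.re) (h1 : a.re < 1) (m : ℕ) :
    2 * (m : ℂ) + 1 + a ≠ 0 ∧ 2 * (m : ℂ) + 1 - a ≠ 0 := by
  have hm : (0 : ℝ) ≤ m := Nat.cast_nonneg m
  constructor <;> intro h <;> have := congrArg Complex.re h <;> simp at this <;> linarith

theorem cos_ne (a : ℂ) (h0 : 0 < a.re) (h1 : a.re < 1) : Complex.cos (Real.pi * a / 2) ≠ 0 := by
  intro h
  rw [Complex.cos_eq_zero_iff] at h
  obtain ⟨j, hj⟩ := h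
  have hp : (Real.pi : ℂ) ≠ 0 := by exact_mod_cast Real.pi_ne_zero
  have : a = 2 * j + 1 := by
    have : (Real.pi : ℂ) * (a - (2 * j + 1)) = 0 := by linear_combination 2 * hj
    rcases mul_eq_zero.mp this with h | h
    · exact absurd h hp
    · linear_combination h
  rw [this] at h0 h1
  have e : (2 * (j : ℂ) + 1).re = ((2 * j + 1 : ℤ) : ℝ) := by simp
  rw [e] at h0 h1
  have h0' : (0 : ℤ) < 2 * j + 1 := by exact_mod_cast h0
  have h1' : (2 * j + 1 : ℤ) < 1 := by exact_mod_cast h1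
  omega

/-- BTZ closed form: the infinite product over the quasinormal frequencies converges
and equals `(cos(πν − iβω/2) + cosh(βk/2)) / (cos(πν) + cosh(βk/2))`. -/
theorem stmt_14 (β k ν : ℝ) (hβ : 0 < β) (hν : 0 < ν) (hν1 : ν < 1) (ω : ℂ) :
    Multipliable (btzFactor β k ν ω) ∧
    (∏' m : ℕ, btzFactor β k ν ω m) =
      (Complex.cos ((Real.pi : ℂ) * (ν : ℂ) - Complex.I * (β : ℂ) * ω / 2) +
          Complex.cosh ((β : ℂ) * (k : ℂ) / 2)) /
        (Complex.cos ((Real.pi : ℂ) * (ν : ℂ)) + Complex.cosh ((β : ℂ) * (k : ℂ) / 2)) := by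
  have hp : (Real.pi : ℂ) ≠ 0 := by exact_mod_cast Real.pi_ne_zero
  have hb : (β : ℂ) ≠ 0 := by exact_mod_cast hβ.ne'
  obtain ⟨c, hc⟩ : ∃ c : ℂ, c = 2 * (Real.pi : ℂ) * Complex.I / (β : ℂ) := ⟨_, rfl⟩
  have hc0 : c ≠ 0 := by rw [hc]; simp [hp, hb, Complex.I_ne_zero]
  obtain ⟨q, hq⟩ : ∃ q : ℂ, q = (((- (k * β / (2 * Real.pi)) : ℝ)) : ℂ) * Complex.I := ⟨_, rfl⟩
  have hqre : q.re = 0 := by rw [hq, Complex.re_ofReal_mul]; simp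
  have hk : (k : ℂ) = c * q := by
    rw [hc, hq]; push_cast; field_simp; rw [Complex.I_sq]; ring
  obtain ⟨w, hw⟩ : ∃ w : ℂ, w = -(ω * β / (2 * Real.pi)) * Complex.I := ⟨_, rfl⟩
  have hω : ω = c * w := by
    rw [hc, hw]; field_simp; rw [Complex.I_sq]; ring
  have ha0 : 0 < ((ν : ℂ) - q).re := by simp [hqre, hν]
  have ha1 : ((ν : ℂ) - q).re < 1 := by simp [hqre, hν1]
  have hb0 : 0 < ((ν : ℂ) + q).re := by simp [hqre, hν]
  have hb1 : ((ν : ℂ) + q).re < 1 := by simp [hqre, hν1]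
  have ca := cos_ne _ ha0 ha1
  have cb := cos_ne _ hb0 hb1
  have H := ((cosProd_hasProd (ν - q + w)).mul (cosProd_hasProd (ν + q + w))).div₀
    ((cosProd_hasProd (ν - q)).mul (cosProd_hasProd (ν + q))) (mul_ne_zero ca cb)
  have hcos : ∀ x y : ℂ, Complex.cos (Real.pi * (x - q + y) / 2) *
      Complex.cos (Real.pi * (x + q + y) / 2) =
      (Complex.cos (Real.pi * (x + y)) + Complex.cos (Real.pi * q)) / 2 := by
    intro x y
    rw [Complex.cos_add_cos]
    have e1 : ((Real.pi : ℂ) * (x + y) + Real.pi * q) / 2 = Real.pi * (x + q + y) / 2 := by ring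
    have e2 : ((Real.pi : ℂ) * (x + y) - Real.pi * q) / 2 = Real.pi * (x - q + y) / 2 := by ring
    rw [e1, e2]; ring
  have hkq : Complex.cos (Real.pi * q) = Complex.cosh ((β : ℂ) * (k : ℂ) / 2) := by
    rw [← Complex.cos_mul_I, ← Complex.cos_neg]; congr 1
    rw [hq]; push_cast; field_simp
  have hww : (Real.pi : ℂ) * (ν + w) = (Real.pi : ℂ) * (ν : ℂ) - Complex.I * (β : ℂ) * ω / 2 := by
    rw [hw]; field_simp; ring
  have hcos0 := hcos ν 0
  simp only [add_zero] at hcos0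
  rw [hcos, hcos0, hkq, hww, div_div_div_cancel_right₀ two_ne_zero] at H
  have hf : btzFactor β k ν ω = fun m : ℕ =>
      ((1 - (ν - q + w) ^ 2 / (2 * (m : ℂ) + 1) ^ 2) * (1 - (ν + q + w) ^ 2 / (2 * (m : ℂ) + 1) ^ 2)) /
      ((1 - (ν - q) ^ 2 / (2 * (m : ℂ) + 1) ^ 2) * (1 - (ν + q) ^ 2 / (2 * (m : ℂ) + 1) ^ 2)) := by
    funext m
    have hN : 2 * (m : ℂ) + 1 ≠ 0 := by exact_mod_cast Nat.succ_ne_zero (2 * m)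
    obtain ⟨a1, a2⟩ := odd_ne _ ha0 ha1 m
    obtain ⟨b1, b2⟩ := odd_ne _ hb0 hb1 m
    unfold btzFactor
    rw [← hc, hk, hω]
    have i1 : c * q - c * (2 * ((m : ℂ) + 1) + ν - 1) = -c * (2 * m + 1 + (ν - q)) := by ring
    have i2 : -(c * q) - c * (2 * ((m : ℂ) + 1) + ν - 1) = -c * (2 * m + 1 + (ν + q)) := by ring
    have i3 : c * q - c * (2 * ((m : ℂ) + 1) - ν - 1) = -c * (2 * m + 1 - (ν + q)) := by ring
    have i4 : -(c * q) - c * (2 * ((m : ℂ) + 1) - ν - 1) = -c * (2 * m + 1 - (ν - q)) := by ring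
    rw [i1, i2, i3, i4]
    generalize 2 * (m : ℂ) + 1 = N at *
    have key : ∀ x : ℂ, 1 - x ^ 2 / N ^ 2 = (N + x) * (N - x) / N ^ 2 := by
      intro x; field_simp; ring
    have d1 : ∀ D : ℂ, D ≠ 0 → 1 - c * w / (-c * D) = (D + w) / D := by
      intro D hD; field_simp; ring
    have d2 : ∀ D : ℂ, D ≠ 0 → 1 + c * w / (-c * D) = (D - w) / D := by
      intro D hD; field_simp; ring
    rw [d1 _ a1, d1 _ b1, d2 _ b2, d2 _ a2, key, key, key, key]
    field_simp
    ring
  rw [hf]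
  exact ⟨H.multipliable, H.tprod_eq⟩
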